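/- arXiv:1511.01290 — 4 statements merged into one kernel-verified Lean document; each statement's English description precedes it below -/
import Mathlib

section
/- Let y be a quasi shell solution, let C_l, C_u > 0 be constants such that C_l γ(r)^q/r⁴ ≤ ϱ(r) and p(r) ≤ C_u γ(r)^{q+1}/r⁴ for all r ∈ [R₀, 2R₀] with γ(r) ≥ 0, and define C_m = max{1, C_u, 4πC_u}, C₀ = min{1/4, (C_m 8^{1/(q+1)})^{−1}}, σ_* = C₀R₀^{1+(2q+1)/(q(q+1))}, γ_* = σ_*/(2(R₀+σ_*)), κ = 9·2^{2q}/(C_l C₀^q), and K = max{C₀, κ}. There exists ε > 0 depending only on k, ℓ, L₀, C_l, C_u such that if R₀ ≤ ε and R₀^{1/(1+q)} K ≤ 1, then there exists a radius r₂ with R₀ + σ_* < r₂ ≤ R₀ + σ_* + κR₀^{(q+2)/(q+1)} such that γ(r₂) = γ_* and γ(r) ≥ γ_* for all r ∈ [R₀ + σ_*, r₂]. -/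
open MeasureTheory Real Set Filter

/-- The constant `c_ℓ = 2π ∫₀¹ s^ℓ (1-s)^{-1/2} ds`. -/
noncomputable def cConst (ℓ : ℝ) : ℝ :=
  2 * π * ∫ s in Set.Ioc (0 : ℝ) 1, s ^ ℓ / Real.sqrt (1 - s)

/-- Energy density of the massless Einstein--Vlasov ansatz. -/
noncomputable def rho (k ℓ L0 : ℝ) (y : ℝ → ℝ) (r : ℝ) : ℝ :=
  cConst ℓ * r ^ (2 * ℓ) *
    ∫ ε in Set.Ioc (Real.sqrt L0 / r) (Real.exp (y r)),
      (1 - ε * Real.exp (-(y r))) ^ k * ε ^ 2 * (ε ^ 2 - L0 / r ^ 2) ^ (ℓ + 1 / 2)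

/-- Radial pressure of the massless Einstein--Vlasov ansatz. -/
noncomputable def pres (k ℓ L0 : ℝ) (y : ℝ → ℝ) (r : ℝ) : ℝ :=
  (cConst ℓ / (2 * ℓ + 3)) * r ^ (2 * ℓ) *
    ∫ ε in Set.Ioc (Real.sqrt L0 / r) (Real.exp (y r)),
      (1 - ε * Real.exp (-(y r))) ^ k * (ε ^ 2 - L0 / r ^ 2) ^ (ℓ + 3 / 2)

/-- The Hawking mass `m(r) = 4π ∫₀ʳ s² ϱ(s) ds`. -/
noncomputable def hawkingMass (k ℓ L0 : ℝ) (y : ℝ → ℝ) (r : ℝ) : ℝ :=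
  4 * π * ∫ s in Set.Ioc (0 : ℝ) r, s ^ 2 * rho k ℓ L0 y s

/-- The characteristic function `γ(r) = y(r) - (1/2) ln (L₀ / r²)`. -/
noncomputable def charFn (L0 : ℝ) (y : ℝ → ℝ) (r : ℝ) : ℝ :=
  y r - (1 / 2) * Real.log (L0 / r ^ 2)

/-- The inner radius `R₀ = √L₀ e^{-y(0)}`. -/
noncomputable def innerRadius (L0 : ℝ) (y : ℝ → ℝ) : ℝ :=
  Real.sqrt L0 * Real.exp (-(y 0))

/-- A quasi shell solution of the massless Einstein--Vlasov system. -/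
def QuasiShell (k ℓ L0 : ℝ) (y : ℝ → ℝ) : Prop :=
  ContDiffOn ℝ 1 y (Set.Ici 0) ∧
  ∀ r > 0, 2 * hawkingMass k ℓ L0 y r / r < 1 ∧
    HasDerivAt y
      (-(1 - 2 * hawkingMass k ℓ L0 y r / r)⁻¹ *
        (4 * π * r * pres k ℓ L0 y r + hawkingMass k ℓ L0 y r / r ^ 2)) r

/-- `q = k + ℓ + 3/2`. -/
noncomputable def qExp (k ℓ : ℝ) : ℝ := k + ℓ + 3 / 2

/-- `C_m = max{1, C_u, 4πC_u}`. -/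
noncomputable def Cmax (Cu : ℝ) : ℝ := max 1 (max Cu (4 * π * Cu))

/-- `C₀ = min{1/4, (C_m 8^{1/(q+1)})⁻¹}`. -/
noncomputable def C0c (k ℓ Cu : ℝ) : ℝ :=
  min (1 / 4) (Cmax Cu * 8 ^ (1 / (qExp k ℓ + 1)))⁻¹

/-- `σ_* = C₀ R₀^{1 + (2q+1)/(q(q+1))}`. -/
noncomputable def sigmaStar (k ℓ Cu R0 : ℝ) : ℝ :=
  C0c k ℓ Cu * R0 ^ (1 + (2 * qExp k ℓ + 1) / (qExp k ℓ * (qExp k ℓ + 1)))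

/-- `γ_* = σ_* / (2(R₀ + σ_*))`. -/
noncomputable def gammaStar (k ℓ Cu R0 : ℝ) : ℝ :=
  sigmaStar k ℓ Cu R0 / (2 * (R0 + sigmaStar k ℓ Cu R0))

/-- `κ = 9·2^{2q} / (C_l C₀^q)`. -/
noncomputable def kappaC (k ℓ Cl Cu : ℝ) : ℝ :=
  9 * 2 ^ (2 * qExp k ℓ) / (Cl * C0c k ℓ Cu ^ qExp k ℓ)

/-- `K = max{C₀, κ}`. -/
noncomputable def Kc (k ℓ Cl Cu : ℝ) : ℝ := max (C0c k ℓ Cu) (kappaC k ℓ Cl Cu)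

/-!
By the field equation, `-r y'` is the ratio of `4π r² p + m / r` to `1 - 2m / r`. On `[R₀, 2R₀]`
both `ϱ r²` and `p r²` are controlled by powers of `γ ≤ log (r / R₀)`, so up to `R₀ + σ_*` this
source is at most a constant times `(σ_* / R₀)^{q+1} / R₀²`, hence small with `R₀`. Therefore `γ`
grows almost like `log (r / R₀)` and exceeds `γ_*` at `R₀ + σ_*`. It cannot stay above `γ_*`
throughout a layer of thickness `½ κ R₀^{(q+2)/(q+1)}` beyond that point, because the lower bound
`ϱ ≥ C_l γ_*^q / r⁴` would accumulate a mass violating `2m / r < 1`. The first radius where `γ`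
returns to `γ_*` is `r₂`.
-/

section FirstCrossing

variable {α δ : Type*} [ConditionallyCompleteLinearOrder α] [TopologicalSpace α] [OrderTopology α]
  [DenselyOrdered α] [LinearOrder δ] [TopologicalSpace δ] [OrderClosedTopology δ]

lemma exists_first_eq_of_continuousOn {f : α → δ} {a b : α} {c : δ} (hf : ContinuousOn f (Icc a b))
    (ha : c < f a) (hb : ∃ r ∈ Icc a b, f r ≤ c) :
    ∃ r ∈ Ioc a b, f r = c ∧ ∀ s ∈ Icc a r, c ≤ f s := by
  have level_of_le {s : α} (hs : s ∈ Icc a b) (hfs : f s ≤ c) : ∃ t ∈ Icc a s, f t = c :=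
    intermediate_value_Icc' hs.1 (hf.mono (Icc_subset_Icc_right hs.2)) ⟨hfs, ha.le⟩
  have hne : (Icc a b ∩ f ⁻¹' {c}).Nonempty := by
    obtain ⟨s, hs, hfs⟩ := hb
    obtain ⟨t, ht, hft⟩ := level_of_le hs hfs
    exact ⟨t, ⟨ht.1, ht.2.trans hs.2⟩, hft⟩
  have hcompact : IsCompact (Icc a b ∩ f ⁻¹' {c}) :=
    isCompact_Icc.of_isClosed_subset
      (hf.preimage_isClosed_of_isClosed isClosed_Icc isClosed_singleton) inter_subset_left
  obtain ⟨r, ⟨hr, hfr : f r = c⟩, hleast⟩ := hcompact.exists_isLeast hne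
  refine ⟨r, ⟨hr.1.lt_of_ne fun h => ha.ne' (h ▸ hfr), hr.2⟩, hfr, fun s hs => ?_⟩
  by_contra! hfs
  obtain ⟨t, ht, hft⟩ := level_of_le ⟨hs.1, hs.2.trans hr.2⟩ hfs.le
  have hrs : r = s :=
    ((hleast ⟨⟨ht.1, ht.2.trans (hs.2.trans hr.2)⟩, hft⟩).trans ht.2).antisymm hs.2
  exact hfs.ne (hrs ▸ hfr)

end FirstCrossing

lemma exists_forall_mul_rpow_le {A p c : ℝ} (hA : 0 < A) (hp : 0 < p) (hc : 0 < c) :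
    ∃ ε > 0, ∀ R, 0 ≤ R → R ≤ ε → A * R ^ p ≤ c := by
  refine ⟨(c / A) ^ p⁻¹, by positivity, fun R hR hRε => ?_⟩
  have hRp : R ^ p ≤ c / A := (le_rpow_inv_iff_of_pos hR (by positivity) hp).1 hRε
  rwa [le_div_iff₀' hA] at hRp

section Matter

variable {k ℓ L0 : ℝ} {y : ℝ → ℝ} {r : ℝ}

lemma cConst_nonneg (ℓ : ℝ) : 0 ≤ cConst ℓ :=
  mul_nonneg (by positivity) <| setIntegral_nonneg measurableSet_Ioc fun _ hs =>
    div_nonneg (rpow_nonneg hs.1.le _) (sqrt_nonneg _)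

lemma one_sub_mul_exp_neg_nonneg {e Y : ℝ} (he : e ≤ exp Y) : 0 ≤ 1 - e * exp (-Y) := by
  have : e * exp (-Y) ≤ exp Y * exp (-Y) := by gcongr
  rw [← exp_add, add_neg_cancel, exp_zero] at this
  linarith

lemma sq_sub_div_sq_nonneg {e : ℝ} (hr : 0 ≤ r) (he : √L0 / r < e) : 0 ≤ e ^ 2 - L0 / r ^ 2 := by
  have he0 : 0 ≤ e := le_trans (by positivity) he.le
  rw [sub_nonneg, ← sqrt_le_left he0, sqrt_div' _ (sq_nonneg r), sqrt_sq hr]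
  exact he.le

lemma rho_nonneg (hr : 0 ≤ r) : 0 ≤ rho k ℓ L0 y r :=
  mul_nonneg (mul_nonneg (cConst_nonneg ℓ) (rpow_nonneg hr _)) <|
    setIntegral_nonneg measurableSet_Ioc fun _ he =>
      mul_nonneg (mul_nonneg (rpow_nonneg (one_sub_mul_exp_neg_nonneg he.2) _) (sq_nonneg _))
        (rpow_nonneg (sq_sub_div_sq_nonneg hr he.1) _)

lemma pres_nonneg (hl : -(3 / 2) ≤ ℓ) (hr : 0 ≤ r) : 0 ≤ pres k ℓ L0 y r :=
  mul_nonneg (mul_nonneg (div_nonneg (cConst_nonneg ℓ) (by linarith)) (rpow_nonneg hr _)) <|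
    setIntegral_nonneg measurableSet_Ioc fun _ he =>
      mul_nonneg (rpow_nonneg (one_sub_mul_exp_neg_nonneg he.2) _)
        (rpow_nonneg (sq_sub_div_sq_nonneg hr he.1) _)

lemma hawkingMass_nonneg : 0 ≤ hawkingMass k ℓ L0 y r :=
  mul_nonneg (by positivity) <| setIntegral_nonneg measurableSet_Ioc fun _ hs =>
    mul_nonneg (sq_nonneg _) (rho_nonneg hs.1.le)

lemma exp_sub_charFn (hL : 0 < L0) (hr : 0 < r) : exp (y r - charFn L0 y r) = √L0 / r := by
  have hlog : y r - charFn L0 y r = log (√L0 / r) := by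
    rw [charFn, log_div hL.ne' (by positivity), log_pow, log_div (by positivity) hr.ne',
      log_sqrt hL.le]
    push_cast
    ring
  rw [hlog, exp_log (by positivity)]

lemma div_sq_eq_exp_sq_mul (hL : 0 < L0) (hr : 0 < r) :
    L0 / r ^ 2 = exp (y r) ^ 2 * exp (-(2 * charFn L0 y r)) := by
  have hsq : L0 / r ^ 2 = (√L0 / r) ^ 2 := by rw [div_pow, sq_sqrt hL.le]
  rw [hsq, ← exp_sub_charFn (y := y) hL hr, ← exp_nat_mul, ← exp_nat_mul, ← exp_add]
  congr 1
  push_cast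
  ring

lemma Ioc_sqrt_div_exp_eq_empty (hL : 0 < L0) (hr : 0 < r) (hγ : charFn L0 y r ≤ 0) :
    Ioc (√L0 / r) (exp (y r)) = ∅ := by
  rw [← exp_sub_charFn (y := y) hL hr, Ioc_eq_empty_iff, not_lt, exp_le_exp]
  linarith

lemma rho_eq_zero (hL : 0 < L0) (hr : 0 < r) (hγ : charFn L0 y r ≤ 0) :
    rho k ℓ L0 y r = 0 := by
  rw [rho, Ioc_sqrt_div_exp_eq_empty hL hr hγ, setIntegral_empty, mul_zero]

lemma pres_eq_zero (hL : 0 < L0) (hr : 0 < r) (hγ : charFn L0 y r ≤ 0) :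
    pres k ℓ L0 y r = 0 := by
  rw [pres, Ioc_sqrt_div_exp_eq_empty hL hr hγ, setIntegral_empty, mul_zero]

lemma rho_integrand_le (hk : 0 ≤ k) (hl : -(1 / 2) ≤ ℓ) (hL : 0 < L0) (hr : 0 < r) {e : ℝ}
    (he : e ∈ Ioc (√L0 / r) (exp (y r))) :
    (1 - e * exp (-(y r))) ^ k * e ^ 2 * (e ^ 2 - L0 / r ^ 2) ^ (ℓ + 1 / 2) ≤
      charFn L0 y r ^ k * exp (y r) ^ 2 * (2 * charFn L0 y r * exp (y r) ^ 2) ^ (ℓ + 1 / 2) := by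
  have he0 : 0 < e := lt_of_le_of_lt (by positivity) he.1
  have hweight0 := one_sub_mul_exp_neg_nonneg he.2
  have hmomentum0 := sq_sub_div_sq_nonneg (L0 := L0) hr.le he.1
  have hweight : 1 - e * exp (-(y r)) ≤ charFn L0 y r := by
    have : exp (-charFn L0 y r) ≤ e * exp (-(y r)) := calc
      exp (-charFn L0 y r) = √L0 / r * exp (-(y r)) := by
        rw [← exp_sub_charFn (y := y) hL hr, ← exp_add]
        congr 1
        ring
      _ ≤ e * exp (-(y r)) := by gcongr; exact he.1.le
    linarith [one_sub_le_exp_neg (charFn L0 y r)]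
  have hesq : e ^ 2 ≤ exp (y r) ^ 2 := pow_le_pow_left₀ he0.le he.2 2
  have hmomentum : e ^ 2 - L0 / r ^ 2 ≤ 2 * charFn L0 y r * exp (y r) ^ 2 := by
    have := mul_le_mul_of_nonneg_left (one_sub_le_exp_neg (2 * charFn L0 y r))
      (sq_nonneg (exp (y r)))
    rw [div_sq_eq_exp_sq_mul (y := y) hL hr]
    linarith
  have hγ : 0 ≤ charFn L0 y r := hweight0.trans hweight
  gcongr
  linarith

/-- The constant `c_ℓ 2^{ℓ+1/2} L₀^{ℓ+2}` in the upper bound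
`ϱ ≤ densityConst · e^{(2ℓ+4)γ} γ^q / r⁴` on the energy density. -/
noncomputable def densityConst (ℓ L0 : ℝ) : ℝ :=
  cConst ℓ * 2 ^ (ℓ + 1 / 2) * L0 ^ (ℓ + 2)

lemma densityConst_nonneg (hL : 0 ≤ L0) : 0 ≤ densityConst ℓ L0 := by
  have := cConst_nonneg ℓ
  unfold densityConst
  positivity

lemma rpow_mul_exp_rpow (hL : 0 < L0) (hr : 0 < r) :
    r ^ (2 * ℓ) * (exp (y r) ^ 2) ^ (ℓ + 2) =
      L0 ^ (ℓ + 2) * exp ((2 * ℓ + 4) * charFn L0 y r) / r ^ 4 := by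
  have hexp : exp (y r) ^ 2 = L0 / r ^ 2 * exp (2 * charFn L0 y r) := by
    rw [div_sq_eq_exp_sq_mul (y := y) hL hr, mul_assoc, ← exp_add, neg_add_cancel, exp_zero,
      mul_one]
  have hradius : (r ^ 2) ^ (ℓ + 2) = r ^ (2 * ℓ) * r ^ 4 := by
    rw [← rpow_natCast r 2, ← rpow_natCast r 4, ← rpow_mul hr.le, ← rpow_add hr]
    congr 1
    push_cast
    ring
  have hgamma : exp (2 * charFn L0 y r) ^ (ℓ + 2) = exp ((2 * ℓ + 4) * charFn L0 y r) := by
    rw [← exp_mul]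
    congr 1
    ring
  rw [hexp, mul_rpow (by positivity) (exp_pos _).le, div_rpow hL.le (by positivity), hradius,
    hgamma]
  field_simp

lemma exp_sub_sqrt_div_le (hL : 0 < L0) (hr : 0 < r) :
    exp (y r) - √L0 / r ≤ charFn L0 y r * exp (y r) := by
  have := mul_le_mul_of_nonneg_left (one_sub_le_exp_neg (charFn L0 y r)) (exp_pos (y r)).le
  rw [← exp_sub_charFn hL hr, sub_eq_add_neg (y r), exp_add]
  linarith

lemma rho_integral_le (hk : 0 ≤ k) (hl : -(1 / 2) ≤ ℓ) (hL : 0 < L0) (hr : 0 < r)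
    (hγ : 0 ≤ charFn L0 y r) :
    ∫ e in Ioc (√L0 / r) (exp (y r)),
        (1 - e * exp (-(y r))) ^ k * e ^ 2 * (e ^ 2 - L0 / r ^ 2) ^ (ℓ + 1 / 2) ≤
      2 ^ (ℓ + 1 / 2) * charFn L0 y r ^ qExp k ℓ * (exp (y r) ^ 2) ^ (ℓ + 2) := by
  have hbound := norm_setIntegral_le_of_norm_le_const (μ := volume) (by simp) fun e he =>
    (norm_of_nonneg (mul_nonneg (mul_nonneg (rpow_nonneg (one_sub_mul_exp_neg_nonneg he.2) _)
      (sq_nonneg e)) (rpow_nonneg (sq_sub_div_sq_nonneg hr.le he.1) _))).trans_le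
      (rho_integrand_le (y := y) hk hl hL hr he)
  have hlen : √L0 / r ≤ exp (y r) := by
    rw [← exp_sub_charFn hL hr, exp_le_exp]
    linarith
  rw [volume_real_Ioc_of_le hlen] at hbound
  have hgamma : charFn L0 y r ^ qExp k ℓ =
      charFn L0 y r ^ k * charFn L0 y r ^ (ℓ + 1 / 2) * charFn L0 y r := by
    rw [← rpow_add_of_nonneg hγ hk (by linarith), ← rpow_add_one' hγ (by linarith), qExp]
    congr 1
    ring
  have henergy : (exp (y r) ^ 2) ^ (ℓ + 2) =
      exp (y r) ^ 2 * (exp (y r) ^ 2) ^ (ℓ + 1 / 2) * exp (y r) := by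
    simp only [← exp_nat_mul, ← exp_mul, ← exp_add]
    congr 1
    push_cast
    ring
  calc _ ≤ _ := (le_norm_self _).trans hbound
    _ ≤ charFn L0 y r ^ k * exp (y r) ^ 2 *
          (2 * charFn L0 y r * exp (y r) ^ 2) ^ (ℓ + 1 / 2) * (charFn L0 y r * exp (y r)) := by
        gcongr
        exact exp_sub_sqrt_div_le hL hr
    _ = _ := by
        rw [hgamma, henergy, mul_rpow (by positivity) (by positivity), mul_rpow two_pos.le hγ]
        ring

lemma rho_le (hk : 0 ≤ k) (hl : -(1 / 2) ≤ ℓ) (hL : 0 < L0) (hr : 0 < r)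
    (hγ : 0 ≤ charFn L0 y r) :
    rho k ℓ L0 y r ≤
      densityConst ℓ L0 * exp ((2 * ℓ + 4) * charFn L0 y r) * charFn L0 y r ^ qExp k ℓ / r ^ 4 := by
  have hc := cConst_nonneg ℓ
  calc rho k ℓ L0 y r
      ≤ cConst ℓ * r ^ (2 * ℓ) *
          (2 ^ (ℓ + 1 / 2) * charFn L0 y r ^ qExp k ℓ * (exp (y r) ^ 2) ^ (ℓ + 2)) := by
        unfold rho
        gcongr
        exact rho_integral_le hk hl hL hr hγ
    _ = cConst ℓ * 2 ^ (ℓ + 1 / 2) * charFn L0 y r ^ qExp k ℓ *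
          (r ^ (2 * ℓ) * (exp (y r) ^ 2) ^ (ℓ + 2)) := by ring
    _ = _ := by
        rw [rpow_mul_exp_rpow hL hr, densityConst]
        ring

lemma measurable_rho (hy : Measurable y) : Measurable (rho k ℓ L0 y) := by
  have hsupport : MeasurableSet {x : ℝ × ℝ | x.2 ∈ Ioc (√L0 / x.1) (exp (y x.1))} := by
    have hlower : Measurable fun x : ℝ × ℝ => √L0 / x.1 := by fun_prop
    have hupper : Measurable fun x : ℝ × ℝ => exp (y x.1) := by fun_prop
    exact (measurableSet_lt hlower measurable_snd).inter (measurableSet_le measurable_snd hupper)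
  have hintegrand : Measurable ({x : ℝ × ℝ | x.2 ∈ Ioc (√L0 / x.1) (exp (y x.1))}.indicator
      fun x => (1 - x.2 * exp (-(y x.1))) ^ k * x.2 ^ 2 *
        (x.2 ^ 2 - L0 / x.1 ^ 2) ^ (ℓ + 1 / 2)) :=
    Measurable.indicator (by fun_prop) hsupport
  have hintegral := (hintegrand.stronglyMeasurable.integral_prod_right' (ν := volume)).measurable
  unfold rho
  simp_rw [← integral_indicator measurableSet_Ioc]
  exact Measurable.mul (by fun_prop) hintegral

lemma aemeasurable_rho {μ : Measure ℝ} (hy : AEMeasurable y μ) :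
    AEMeasurable (rho k ℓ L0 y) μ :=
  ⟨rho k ℓ L0 (hy.mk y), measurable_rho hy.measurable_mk,
    hy.ae_eq_mk.mono fun r hr => by simp only [rho, hr]⟩

lemma innerRadius_pos (hL : 0 < L0) : 0 < innerRadius L0 y :=
  mul_pos (sqrt_pos.2 hL) (exp_pos _)

lemma charFn_eq (hL : 0 < L0) (hr : 0 < r) :
    charFn L0 y r = y r - y 0 + log (r / innerRadius L0 y) := by
  rw [charFn, innerRadius, log_div hL.ne' (by positivity), log_pow, log_div hr.ne' (by positivity),
    log_mul (by positivity) (by positivity), log_sqrt hL.le, log_exp]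
  push_cast
  ring

end Matter

/-- The rate of decay `-r y'(r) = (4π r² p + m / r) / (1 - 2m / r)` of a quasi shell solution with
respect to `log r`, as prescribed by the field equation. -/
noncomputable def logDecay (k ℓ L0 : ℝ) (y : ℝ → ℝ) (r : ℝ) : ℝ :=
  (4 * π * r ^ 2 * pres k ℓ L0 y r + hawkingMass k ℓ L0 y r / r) /
    (1 - 2 * hawkingMass k ℓ L0 y r / r)

lemma logDecay_le {k ℓ L0 u : ℝ} {y : ℝ → ℝ} {r : ℝ} (hl : -(3 / 2) ≤ ℓ) (hr : 0 ≤ r)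
    (hsource : 4 * π * r ^ 2 * pres k ℓ L0 y r + hawkingMass k ℓ L0 y r / r ≤ u) (hu : u < 1 / 2) :
    logDecay k ℓ L0 y r ≤ u / (1 - 2 * u) := by
  have hp := pres_nonneg (k := k) (L0 := L0) (y := y) hl hr
  have hm := hawkingMass_nonneg (k := k) (ℓ := ℓ) (L0 := L0) (y := y) (r := r)
  have hpressure : 0 ≤ 4 * π * r ^ 2 * pres k ℓ L0 y r := by positivity
  have hcompactness : 2 * hawkingMass k ℓ L0 y r / r ≤ 2 * u := by
    rw [mul_div_assoc]
    linarith
  have hsource0 : 0 ≤ 4 * π * r ^ 2 * pres k ℓ L0 y r + hawkingMass k ℓ L0 y r / r := by positivity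
  have hu0 := hsource0.trans hsource
  rw [logDecay]
  gcongr
  linarith

namespace QuasiShell

variable {k ℓ L0 : ℝ} {y : ℝ → ℝ} {r : ℝ}

lemma hasDerivAt (hy : QuasiShell k ℓ L0 y) (hr : 0 < r) :
    HasDerivAt y (-logDecay k ℓ L0 y r / r) r := by
  convert (hy.2 r hr).2 using 1
  rw [logDecay, div_eq_mul_inv _ (1 - _)]
  field_simp

lemma logDecay_nonneg (hl : -(3 / 2) ≤ ℓ) (hy : QuasiShell k ℓ L0 y) (hr : 0 < r) :
    0 ≤ logDecay k ℓ L0 y r := by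
  have hp := pres_nonneg (k := k) (L0 := L0) (y := y) hl hr.le
  have hm := hawkingMass_nonneg (k := k) (ℓ := ℓ) (L0 := L0) (y := y) (r := r)
  exact div_nonneg (by positivity) (by linarith [(hy.2 r hr).1])

lemma antitoneOn (hl : -(3 / 2) ≤ ℓ) (hy : QuasiShell k ℓ L0 y) : AntitoneOn y (Ici 0) := by
  refine antitoneOn_of_hasDerivWithinAt_nonpos (convex_Ici 0) hy.1.continuousOn
    (f' := fun r => -logDecay k ℓ L0 y r / r) (fun r hr => ?_) fun r hr => ?_ <;>
    rw [interior_Ici, mem_Ioi] at hr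
  · exact (hy.hasDerivAt hr).hasDerivWithinAt
  · exact div_nonpos_of_nonpos_of_nonneg (neg_nonpos.2 (logDecay_nonneg hl hy hr)) hr.le

lemma charFn_le_log (hl : -(3 / 2) ≤ ℓ) (hL : 0 < L0) (hy : QuasiShell k ℓ L0 y) (hr : 0 < r) :
    charFn L0 y r ≤ log (r / innerRadius L0 y) := by
  have := hy.antitoneOn hl self_mem_Ici (mem_Ici.2 hr.le) hr.le
  rw [charFn_eq hL hr]
  linarith

lemma charFn_nonpos (hl : -(3 / 2) ≤ ℓ) (hL : 0 < L0) (hy : QuasiShell k ℓ L0 y) (hr : 0 < r)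
    (hrR : r ≤ innerRadius L0 y) : charFn L0 y r ≤ 0 := by
  have hR := innerRadius_pos (y := y) hL
  exact (hy.charFn_le_log hl hL hr).trans
    (log_nonpos (by positivity) ((div_le_one hR).2 hrR))

lemma rho_eq_zero_of_le_innerRadius (hl : -(3 / 2) ≤ ℓ) (hL : 0 < L0) (hy : QuasiShell k ℓ L0 y)
    (hr : 0 < r) (hrR : r ≤ innerRadius L0 y) : rho k ℓ L0 y r = 0 :=
  rho_eq_zero hL hr (hy.charFn_nonpos hl hL hr hrR)

lemma hawkingMass_eq_setIntegral_innerRadius (hl : -(3 / 2) ≤ ℓ) (hL : 0 < L0)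
    (hy : QuasiShell k ℓ L0 y) (r : ℝ) :
    hawkingMass k ℓ L0 y r =
      4 * π * ∫ s in Ioc (innerRadius L0 y) r, s ^ 2 * rho k ℓ L0 y s := by
  rw [hawkingMass, setIntegral_eq_of_subset_of_forall_sdiff_eq_zero measurableSet_Ioc
    (Ioc_subset_Ioc_left (innerRadius_pos hL).le)]
  intro s hs
  have hsR : s ≤ innerRadius L0 y := not_lt.1 fun h => hs.2 ⟨h, hs.1.2⟩
  rw [hy.rho_eq_zero_of_le_innerRadius hl hL hs.1.1 hsR, mul_zero]

lemma logDecay_eq_zero (hl : -(3 / 2) ≤ ℓ) (hL : 0 < L0) (hy : QuasiShell k ℓ L0 y) (hr : 0 < r)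
    (hrR : r ≤ innerRadius L0 y) : logDecay k ℓ L0 y r = 0 := by
  rw [logDecay, pres_eq_zero hL hr (hy.charFn_nonpos hl hL hr hrR),
    hy.hawkingMass_eq_setIntegral_innerRadius hl hL, Ioc_eq_empty hrR.not_gt]
  simp

lemma apply_innerRadius (hl : -(3 / 2) ≤ ℓ) (hL : 0 < L0) (hy : QuasiShell k ℓ L0 y) :
    y (innerRadius L0 y) = y 0 := by
  have hR := innerRadius_pos (y := y) hL
  obtain ⟨c, hc, hslope⟩ := exists_hasDerivAt_eq_slope y (fun r => -logDecay k ℓ L0 y r / r) hR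
    (hy.1.continuousOn.mono Icc_subset_Ici_self) fun r hr => hy.hasDerivAt hr.1
  rw [hy.logDecay_eq_zero hl hL hc.1 hc.2.le, neg_zero, zero_div, sub_zero] at hslope
  exact sub_eq_zero.1 ((div_eq_zero_iff.1 hslope.symm).resolve_right hR.ne')

lemma continuousOn_charFn (hL : 0 < L0) (hy : QuasiShell k ℓ L0 y) :
    ContinuousOn (charFn L0 y) (Ioi 0) := by
  refine (hy.1.continuousOn.mono Ioi_subset_Ici_self).sub (continuousOn_const.mul ?_)
  refine ContinuousOn.log (continuousOn_const.div (continuousOn_pow 2) fun r hr => ?_)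
    fun r hr => ?_ <;> rw [mem_Ioi] at hr <;> positivity

lemma exists_charFn_eq_mul_log (hl : -(3 / 2) ≤ ℓ) (hL : 0 < L0) (hy : QuasiShell k ℓ L0 y)
    (hr : innerRadius L0 y < r) :
    ∃ s ∈ Ioo (innerRadius L0 y) r,
      charFn L0 y r = (1 - logDecay k ℓ L0 y s) * log (r / innerRadius L0 y) := by
  have hR := innerRadius_pos (y := y) hL
  have hpos {s : ℝ} (hs : innerRadius L0 y ≤ s) : 0 < s := hR.trans_le hs
  obtain ⟨s, hs, hslope⟩ := exists_ratio_hasDerivAt_eq_ratio_slope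
    y (fun s => -logDecay k ℓ L0 y s / s) hr (hy.1.continuousOn.mono fun _ hs => (hpos hs.1).le)
    (fun s hs => hy.hasDerivAt (hpos hs.1.le)) log (fun s => s⁻¹)
    (continuousOn_log.mono fun _ hs => (hpos hs.1).ne')
    fun s hs => hasDerivAt_log (hpos hs.1.le).ne'
  have hs0 := hpos hs.1.le
  refine ⟨s, hs, ?_⟩
  rw [charFn_eq hL (hpos hr.le), ← hy.apply_innerRadius hl hL,
    log_div (hpos hr.le).ne' hR.ne']
  field_simp at hslope
  linarith

lemma sq_mul_rho_le (hk : 0 ≤ k) (hl : -(1 / 2) ≤ ℓ) (hL : 0 < L0) (hy : QuasiShell k ℓ L0 y)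
    {s : ℝ} (hs : 0 < s) (hsr : s ≤ r) (hr : innerRadius L0 y ≤ r) :
    s ^ 2 * rho k ℓ L0 y s ≤
      densityConst ℓ L0 * (r / innerRadius L0 y) ^ (2 * ℓ + 4) *
        log (r / innerRadius L0 y) ^ qExp k ℓ / innerRadius L0 y ^ 2 := by
  have hR := innerRadius_pos (y := y) hL
  have hr0 := hR.trans_le hr
  have hD := densityConst_nonneg (ℓ := ℓ) hL.le
  have hq : 0 ≤ qExp k ℓ := by unfold qExp; linarith
  have hlog : 0 ≤ log (r / innerRadius L0 y) := log_nonneg ((one_le_div hR).2 hr)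
  rcases le_or_gt (charFn L0 y s) 0 with hγ | hγ
  · rw [rho_eq_zero hL hs hγ, mul_zero]
    positivity
  have hRs : innerRadius L0 y ≤ s :=
    le_of_not_ge fun h => hγ.not_ge (hy.charFn_nonpos (by linarith) hL hs h)
  have hγlog : charFn L0 y s ≤ log (r / innerRadius L0 y) :=
    (hy.charFn_le_log (by linarith) hL hs).trans (log_le_log (by positivity) (by gcongr))
  have hexp : exp ((2 * ℓ + 4) * charFn L0 y s) ≤ (r / innerRadius L0 y) ^ (2 * ℓ + 4) := by
    rw [rpow_def_of_pos (by positivity), mul_comm (log _)]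
    gcongr
    linarith
  calc s ^ 2 * rho k ℓ L0 y s
      ≤ s ^ 2 * (densityConst ℓ L0 * exp ((2 * ℓ + 4) * charFn L0 y s) *
          charFn L0 y s ^ qExp k ℓ / s ^ 4) := by
        gcongr
        exact rho_le hk hl hL hs hγ.le
    _ = densityConst ℓ L0 * exp ((2 * ℓ + 4) * charFn L0 y s) *
          charFn L0 y s ^ qExp k ℓ / s ^ 2 := by
        field_simp
    _ ≤ _ := by gcongr

lemma integrableOn_sq_mul_rho (hk : 0 ≤ k) (hl : -(1 / 2) ≤ ℓ) (hL : 0 < L0)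
    (hy : QuasiShell k ℓ L0 y) (r : ℝ) :
    IntegrableOn (fun s => s ^ 2 * rho k ℓ L0 y s) (Ioc 0 r) := by
  have hmeas : AEMeasurable (rho k ℓ L0 y) (volume.restrict (Ioc 0 r)) :=
    aemeasurable_rho <| (hy.1.continuousOn.mono fun _ hs => hs.1.le).aemeasurable measurableSet_Ioc
  obtain ⟨C, hC⟩ : ∃ C, ∀ s ∈ Ioc 0 r, s ^ 2 * rho k ℓ L0 y s ≤ C :=
    ⟨_, fun s hs => hy.sq_mul_rho_le hk hl hL hs.1 (hs.2.trans (le_max_left r _))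
      (le_max_right r (innerRadius L0 y))⟩
  have hbound : ∀ s ∈ Ioc 0 r, ‖s ^ 2 * rho k ℓ L0 y s‖ ≤ C := fun s hs => by
    rw [norm_of_nonneg (mul_nonneg (sq_nonneg s) (rho_nonneg hs.1.le))]
    exact hC s hs
  exact IntegrableOn.of_bound (by simp)
    ((measurable_id.pow_const 2).aemeasurable.mul hmeas).aestronglyMeasurable C
    (ae_restrict_of_forall_mem measurableSet_Ioc hbound)

lemma hawkingMass_div_le (hk : 0 ≤ k) (hl : -(1 / 2) ≤ ℓ) (hL : 0 < L0)
    (hy : QuasiShell k ℓ L0 y) (hr : innerRadius L0 y ≤ r) :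
    hawkingMass k ℓ L0 y r / r ≤
      4 * π * (densityConst ℓ L0 * (r / innerRadius L0 y) ^ (2 * ℓ + 4) *
        log (r / innerRadius L0 y) ^ (qExp k ℓ + 1) / innerRadius L0 y ^ 2) := by
  have hR := innerRadius_pos (y := y) hL
  have hr0 := hR.trans_le hr
  have hD := densityConst_nonneg (ℓ := ℓ) hL.le
  have hlog : 0 ≤ log (r / innerRadius L0 y) := log_nonneg ((one_le_div hR).2 hr)
  set B := densityConst ℓ L0 * (r / innerRadius L0 y) ^ (2 * ℓ + 4) *
    log (r / innerRadius L0 y) ^ qExp k ℓ / innerRadius L0 y ^ 2 with hB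
  have hint : ∫ s in Ioc (innerRadius L0 y) r, s ^ 2 * rho k ℓ L0 y s ≤
      B * (r - innerRadius L0 y) := by
    rw [← volume_real_Ioc_of_le hr]
    refine (le_norm_self _).trans
      (norm_setIntegral_le_of_norm_le_const (by simp) fun s hs => ?_)
    have hs0 := hR.trans hs.1
    rw [norm_of_nonneg (mul_nonneg (sq_nonneg s) (rho_nonneg hs0.le))]
    exact hy.sq_mul_rho_le hk hl hL hs0 hs.2 hr
  have hthickness : (r - innerRadius L0 y) / r ≤ log (r / innerRadius L0 y) := by
    have := one_sub_inv_le_log_of_pos (div_pos hr0 hR)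
    rwa [inv_div, one_sub_div hr0.ne'] at this
  calc hawkingMass k ℓ L0 y r / r
      ≤ 4 * π * (B * (r - innerRadius L0 y)) / r := by
        rw [hy.hawkingMass_eq_setIntegral_innerRadius (by linarith) hL]
        gcongr
    _ = 4 * π * (B * ((r - innerRadius L0 y) / r)) := by ring
    _ ≤ 4 * π * (B * log (r / innerRadius L0 y)) := by
        have : 0 ≤ B := by positivity
        gcongr
    _ = _ := by
        rw [hB, rpow_add_one' hlog (by unfold qExp; linarith)]
        ring

lemma mul_sub_le_hawkingMass (hk : 0 ≤ k) (hl : -(1 / 2) ≤ ℓ) (hL : 0 < L0)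
    (hy : QuasiShell k ℓ L0 y) {a b c : ℝ} (ha : 0 ≤ a) (hab : a ≤ b)
    (hc : ∀ s ∈ Ioc a b, c ≤ s ^ 2 * rho k ℓ L0 y s) :
    4 * π * (c * (b - a)) ≤ hawkingMass k ℓ L0 y b := by
  have hint := hy.integrableOn_sq_mul_rho hk hl hL b
  have hsub : Ioc a b ⊆ Ioc 0 b := Ioc_subset_Ioc_left ha
  unfold hawkingMass
  gcongr
  calc c * (b - a) = c * volume.real (Ioc a b) := by rw [volume_real_Ioc_of_le hab]
    _ ≤ ∫ s in Ioc a b, s ^ 2 * rho k ℓ L0 y s :=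
        setIntegral_ge_of_const_le_real measurableSet_Ioc (by simp) hc (hint.mono_set hsub)
    _ ≤ ∫ s in Ioc 0 b, s ^ 2 * rho k ℓ L0 y s :=
        setIntegral_mono_set hint
          (ae_restrict_of_forall_mem measurableSet_Ioc fun s hs =>
            mul_nonneg (sq_nonneg s) (rho_nonneg hs.1.le)) hsub.eventuallyLE

lemma source_le {Cu : ℝ} (hk : 0 ≤ k) (hl : -(1 / 2) ≤ ℓ) (hL : 0 < L0) (hCu : 0 ≤ Cu)
    (hy : QuasiShell k ℓ L0 y) (hr : innerRadius L0 y ≤ r) (hr2 : r ≤ 2 * innerRadius L0 y)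
    (hpres : 0 ≤ charFn L0 y r →
      pres k ℓ L0 y r ≤ Cu * charFn L0 y r ^ (qExp k ℓ + 1) / r ^ 4) :
    4 * π * r ^ 2 * pres k ℓ L0 y r + hawkingMass k ℓ L0 y r / r ≤
      4 * π * (Cu + densityConst ℓ L0 * 2 ^ (2 * ℓ + 4)) *
        (log (r / innerRadius L0 y) ^ (qExp k ℓ + 1) / innerRadius L0 y ^ 2) := by
  have hR := innerRadius_pos (y := y) hL
  have hr0 := hR.trans_le hr
  have hD := densityConst_nonneg (ℓ := ℓ) hL.le
  have hq : 0 ≤ qExp k ℓ + 1 := by unfold qExp; linarith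
  have hlog : 0 ≤ log (r / innerRadius L0 y) := log_nonneg ((one_le_div hR).2 hr)
  have hpressure : 4 * π * r ^ 2 * pres k ℓ L0 y r ≤
      4 * π * (Cu * log (r / innerRadius L0 y) ^ (qExp k ℓ + 1) / innerRadius L0 y ^ 2) := by
    rcases le_or_gt (charFn L0 y r) 0 with hγ | hγ
    · rw [pres_eq_zero hL hr0 hγ, mul_zero]
      positivity
    calc 4 * π * r ^ 2 * pres k ℓ L0 y r
        ≤ 4 * π * r ^ 2 * (Cu * charFn L0 y r ^ (qExp k ℓ + 1) / r ^ 4) := by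
          gcongr
          exact hpres hγ.le
      _ = 4 * π * (Cu * charFn L0 y r ^ (qExp k ℓ + 1) / r ^ 2) := by field_simp
      _ ≤ _ := by
          gcongr
          exact hy.charFn_le_log (by linarith) hL hr0
  have hmass : hawkingMass k ℓ L0 y r / r ≤
      4 * π * (densityConst ℓ L0 * 2 ^ (2 * ℓ + 4) *
        log (r / innerRadius L0 y) ^ (qExp k ℓ + 1) / innerRadius L0 y ^ 2) := by
    refine (hy.hawkingMass_div_le hk hl hL hr).trans ?_
    have hratio : r / innerRadius L0 y ≤ 2 := (div_le_iff₀ hR).2 hr2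
    gcongr
    linarith
  calc _ ≤ _ := add_le_add hpressure hmass
    _ = _ := by ring

lemma mul_log_le_charFn {θ : ℝ} (hl : -(3 / 2) ≤ ℓ) (hL : 0 < L0) (hy : QuasiShell k ℓ L0 y)
    (hr : innerRadius L0 y < r)
    (hdecay : ∀ s ∈ Ioo (innerRadius L0 y) r, logDecay k ℓ L0 y s ≤ θ) :
    (1 - θ) * log (r / innerRadius L0 y) ≤ charFn L0 y r := by
  have hR := innerRadius_pos (y := y) hL
  have hlog : 0 ≤ log (r / innerRadius L0 y) := log_nonneg ((one_le_div hR).2 hr.le)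
  obtain ⟨s, hs, heq⟩ := hy.exists_charFn_eq_mul_log hl hL hr
  rw [heq]
  gcongr
  exact hdecay s hs

/-- A layer in which `γ ≥ g` has density at least `C_l g^q / r⁴`; if it is too thick, the mass it
carries violates `2m / r < 1`. -/
lemma exists_charFn_lt {Cl a b g : ℝ} (hk : 0 ≤ k) (hl : -(1 / 2) ≤ ℓ) (hL : 0 < L0)
    (hCl : 0 ≤ Cl) (hy : QuasiShell k ℓ L0 y)
    (hrho : ∀ r ∈ Icc a b, 0 ≤ charFn L0 y r →
      Cl * charFn L0 y r ^ qExp k ℓ / r ^ 4 ≤ rho k ℓ L0 y r)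
    (ha : 0 < a) (hab : a ≤ b) (hg : 0 ≤ g)
    (hthick : b ^ 3 ≤ 8 * π * (Cl * g ^ qExp k ℓ * (b - a))) :
    ∃ r ∈ Icc a b, charFn L0 y r < g := by
  by_contra! hγ
  have hb := ha.trans_le hab
  have hq : 0 ≤ qExp k ℓ := by unfold qExp; linarith
  have hdensity : ∀ s ∈ Ioc a b, Cl * g ^ qExp k ℓ / b ^ 2 ≤ s ^ 2 * rho k ℓ L0 y s := by
    intro s hs
    have hs0 := ha.trans hs.1
    have hγs := hγ s (Ioc_subset_Icc_self hs)
    have hγs0 := hg.trans hγs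
    calc Cl * g ^ qExp k ℓ / b ^ 2 ≤ Cl * charFn L0 y s ^ qExp k ℓ / s ^ 2 := by
          gcongr
          exact hs.2
      _ = s ^ 2 * (Cl * charFn L0 y s ^ qExp k ℓ / s ^ 4) := by field_simp
      _ ≤ s ^ 2 * rho k ℓ L0 y s := by
          gcongr
          exact hrho s (Ioc_subset_Icc_self hs) hγs0
  have hmass := hy.mul_sub_le_hawkingMass hk hl hL ha.le hab hdensity
  have hlight := (div_lt_one hb).1 (hy.2 b hb).1
  have hheavy : b ≤ 2 * (4 * π * (Cl * g ^ qExp k ℓ / b ^ 2 * (b - a))) := by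
    calc b = b ^ 3 / b ^ 2 := by field_simp
      _ ≤ 8 * π * (Cl * g ^ qExp k ℓ * (b - a)) / b ^ 2 := by gcongr
      _ = _ := by ring
  linarith

end QuasiShell

section Parameters

variable {k ℓ Cl Cu R : ℝ}

lemma qExp_pos (hk : 0 ≤ k) (hl : -(1 / 2) ≤ ℓ) : 0 < qExp k ℓ := by
  unfold qExp
  linarith

lemma C0c_pos : 0 < C0c k ℓ Cu := by
  have : 0 < Cmax Cu := one_pos.trans_le (le_max_left _ _)
  unfold C0c
  positivity

lemma C0c_le : C0c k ℓ Cu ≤ 1 / 4 :=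
  min_le_left _ _

lemma sigmaStar_pos (hR : 0 < R) : 0 < sigmaStar k ℓ Cu R :=
  mul_pos C0c_pos (rpow_pos_of_pos hR _)

lemma gammaStar_pos (hR : 0 < R) : 0 < gammaStar k ℓ Cu R := by
  have := sigmaStar_pos (k := k) (ℓ := ℓ) (Cu := Cu) hR
  unfold gammaStar
  positivity

lemma kappaC_pos (hCl : 0 < Cl) : 0 < kappaC k ℓ Cl Cu := by
  have := C0c_pos (k := k) (ℓ := ℓ) (Cu := Cu)
  unfold kappaC
  positivity

lemma sigmaStar_div (hR : 0 < R) :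
    sigmaStar k ℓ Cu R / R =
      C0c k ℓ Cu * R ^ ((2 * qExp k ℓ + 1) / (qExp k ℓ * (qExp k ℓ + 1))) := by
  rw [sigmaStar, rpow_add hR, rpow_one]
  field_simp

lemma sigmaStar_le (hq : 0 ≤ qExp k ℓ) (hR : 0 < R) (hR1 : R ≤ 1) :
    sigmaStar k ℓ Cu R ≤ R / 4 := by
  have hratio : sigmaStar k ℓ Cu R / R ≤ 1 / 4 := by
    rw [sigmaStar_div hR]
    exact (mul_le_of_le_one_right C0c_pos.le (rpow_le_one hR.le hR1 (by positivity))).trans C0c_le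
  rw [div_le_iff₀ hR] at hratio
  linarith

lemma gammaStar_lt_mul_log (hR : 0 < R) :
    gammaStar k ℓ Cu R < 3 / 4 * log ((R + sigmaStar k ℓ Cu R) / R) := by
  have hσ := sigmaStar_pos (k := k) (ℓ := ℓ) (Cu := Cu) hR
  have hlog := one_sub_inv_le_log_of_pos (div_pos (add_pos hR hσ) hR)
  rw [inv_div, one_sub_div (add_pos hR hσ).ne', add_sub_cancel_left] at hlog
  have hratio : 0 < sigmaStar k ℓ Cu R / (R + sigmaStar k ℓ Cu R) := by positivity
  have hgamma : gammaStar k ℓ Cu R = 1 / 2 * (sigmaStar k ℓ Cu R / (R + sigmaStar k ℓ Cu R)) := by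
    unfold gammaStar
    field_simp
  linarith

/-- The exponent in `σ_*` is chosen so that `(σ_* / R)^{q+1}` beats `R²` by a positive power. -/
lemma sigmaStar_div_rpow_le (hq : 0 < qExp k ℓ) (hR : 0 < R) :
    (sigmaStar k ℓ Cu R / R) ^ (qExp k ℓ + 1) / R ^ 2 ≤ R ^ (qExp k ℓ)⁻¹ := by
  have hC0 := C0c_pos (k := k) (ℓ := ℓ) (Cu := Cu)
  have hC0_le : C0c k ℓ Cu ^ (qExp k ℓ + 1) ≤ 1 :=
    rpow_le_one hC0.le (C0c_le.trans (by norm_num)) (by linarith)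
  have hexponent : (2 * qExp k ℓ + 1) / (qExp k ℓ * (qExp k ℓ + 1)) * (qExp k ℓ + 1) =
      (qExp k ℓ)⁻¹ + (2 : ℕ) := by
    push_cast
    field_simp
    ring
  rw [sigmaStar_div hR, mul_rpow hC0.le (by positivity), ← rpow_mul hR.le, hexponent,
    rpow_add_natCast hR.ne', div_le_iff₀ (by positivity)]
  exact mul_le_of_le_one_left (by positivity) hC0_le

lemma sigmaStar_div_four_le_gammaStar (hR : 0 < R) (hσ : sigmaStar k ℓ Cu R ≤ R) :
    sigmaStar k ℓ Cu R / R / 4 ≤ gammaStar k ℓ Cu R := by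
  have hσ0 := sigmaStar_pos (k := k) (ℓ := ℓ) (Cu := Cu) hR
  rw [gammaStar, div_div]
  exact div_le_div_of_nonneg_left hσ0.le (by positivity) (by linarith)

/-- The constant `κ` and the exponent `(q+2)/(q+1)` are chosen for this balance to be an equality
when `γ_*` is replaced by its lower bound `σ_* / (4R)`. -/
lemma nine_mul_cube_le (hq : 0 < qExp k ℓ) (hCl : 0 < Cl) (hR : 0 < R)
    (hσ : sigmaStar k ℓ Cu R ≤ R) :
    9 * R ^ 3 ≤ Cl * gammaStar k ℓ Cu R ^ qExp k ℓ *
      (kappaC k ℓ Cl Cu * R ^ ((qExp k ℓ + 2) / (qExp k ℓ + 1))) := by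
  have hC0 := C0c_pos (k := k) (ℓ := ℓ) (Cu := Cu)
  have hσ0 := sigmaStar_pos (k := k) (ℓ := ℓ) (Cu := Cu) hR
  have hκ := kappaC_pos (k := k) (ℓ := ℓ) (Cu := Cu) hCl
  have hpower : R ^ ((2 * qExp k ℓ + 1) / (qExp k ℓ * (qExp k ℓ + 1)) * qExp k ℓ) *
      R ^ ((qExp k ℓ + 2) / (qExp k ℓ + 1)) = R ^ 3 := by
    rw [← rpow_add hR, ← rpow_natCast R 3]
    congr 1
    push_cast
    field_simp
    ring
  have hsigma : (sigmaStar k ℓ Cu R / R / 4) ^ qExp k ℓ = C0c k ℓ Cu ^ qExp k ℓ *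
      R ^ ((2 * qExp k ℓ + 1) / (qExp k ℓ * (qExp k ℓ + 1)) * qExp k ℓ) /
        2 ^ (2 * qExp k ℓ) := by
    rw [sigmaStar_div hR, div_rpow (by positivity) (by norm_num),
      mul_rpow hC0.le (by positivity), ← rpow_mul hR.le, rpow_mul two_pos.le]
    norm_num
  have hkappa : Cl * C0c k ℓ Cu ^ qExp k ℓ / 2 ^ (2 * qExp k ℓ) * kappaC k ℓ Cl Cu = 9 := by
    have := rpow_pos_of_pos hC0 (qExp k ℓ)
    have := rpow_pos_of_pos two_pos (2 * qExp k ℓ)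
    rw [kappaC]
    field_simp
  calc 9 * R ^ 3 = Cl * (sigmaStar k ℓ Cu R / R / 4) ^ qExp k ℓ *
        (kappaC k ℓ Cl Cu * R ^ ((qExp k ℓ + 2) / (qExp k ℓ + 1))) := by
        rw [← hkappa, ← hpower, hsigma]
        ring
    _ ≤ _ := by
        gcongr
        exact sigmaStar_div_four_le_gammaStar hR hσ

lemma kappaC_mul_rpow_le (hq : 0 < qExp k ℓ) (hR : 0 < R)
    (hK : R ^ (1 / (1 + qExp k ℓ)) * Kc k ℓ Cl Cu ≤ 1) :
    kappaC k ℓ Cl Cu * R ^ ((qExp k ℓ + 2) / (qExp k ℓ + 1)) ≤ R := by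
  have hexponent : (qExp k ℓ + 2) / (qExp k ℓ + 1) = 1 + 1 / (1 + qExp k ℓ) := by
    field_simp
    ring
  have hκ : R ^ (1 / (1 + qExp k ℓ)) * kappaC k ℓ Cl Cu ≤ 1 := le_trans (by
    gcongr
    exact le_max_right _ _) hK
  rw [hexponent, rpow_add hR, rpow_one]
  calc kappaC k ℓ Cl Cu * (R * R ^ (1 / (1 + qExp k ℓ))) =
        R * (R ^ (1 / (1 + qExp k ℓ)) * kappaC k ℓ Cl Cu) := by ring
    _ ≤ R := mul_le_of_le_one_right hR.le hκ

end Parameters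

namespace QuasiShell

variable {k ℓ L0 Cl Cu : ℝ} {y : ℝ → ℝ}

lemma gammaStar_lt_charFn (hk : 0 ≤ k) (hl : -(1 / 2) ≤ ℓ) (hL : 0 < L0) (hCu : 0 ≤ Cu)
    (hy : QuasiShell k ℓ L0 y)
    (hpres : ∀ r, innerRadius L0 y ≤ r → r ≤ 2 * innerRadius L0 y → 0 ≤ charFn L0 y r →
      pres k ℓ L0 y r ≤ Cu * charFn L0 y r ^ (qExp k ℓ + 1) / r ^ 4)
    (hσ : sigmaStar k ℓ Cu (innerRadius L0 y) ≤ innerRadius L0 y)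
    (hsmall : 4 * π * (Cu + densityConst ℓ L0 * 2 ^ (2 * ℓ + 4)) *
      innerRadius L0 y ^ (qExp k ℓ)⁻¹ ≤ 1 / 6) :
    gammaStar k ℓ Cu (innerRadius L0 y) <
      charFn L0 y (innerRadius L0 y + sigmaStar k ℓ Cu (innerRadius L0 y)) := by
  have hq := qExp_pos hk hl
  have hD := densityConst_nonneg (ℓ := ℓ) hL.le
  have hR := innerRadius_pos (y := y) hL
  have hσ0 := sigmaStar_pos (k := k) (ℓ := ℓ) (Cu := Cu) hR
  set R := innerRadius L0 y
  set σ := sigmaStar k ℓ Cu R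
  have hdecay : ∀ s ∈ Ioo R (R + σ), logDecay k ℓ L0 y s ≤ 1 / 6 / (1 - 2 * (1 / 6)) := by
    intro s hs
    have hs0 := hR.trans hs.1
    have hs2 : s ≤ 2 * R := by linarith [hs.2]
    have hlog0 : 0 ≤ log (s / R) := log_nonneg ((one_le_div hR).2 hs.1.le)
    have hlog : log (s / R) ≤ σ / R := by
      have := log_le_sub_one_of_pos (div_pos hs0 hR)
      rw [div_sub_one hR.ne'] at this
      exact this.trans (by gcongr; linarith [hs.2])
    refine logDecay_le (by linarith) hs0.le ?_ (by norm_num)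
    calc _ ≤ _ := hy.source_le hk hl hL hCu hs.1.le hs2 (hpres s hs.1.le hs2)
      _ ≤ 4 * π * (Cu + densityConst ℓ L0 * 2 ^ (2 * ℓ + 4)) * R ^ (qExp k ℓ)⁻¹ := by
          gcongr
          exact le_trans (by gcongr) (sigmaStar_div_rpow_le hq hR)
      _ ≤ 1 / 6 := hsmall
  have hgrowth := hy.mul_log_le_charFn (by linarith) hL (lt_add_of_pos_right R hσ0) hdecay
  norm_num at hgrowth
  exact (gammaStar_lt_mul_log hR).trans_le hgrowth

/-- Half of the thickness `κ R₀^{(q+2)/(q+1)}` already suffices, which keeps the layer inside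
`[R₀, 2R₀]`, where the lower bound on the density is available. -/
lemma exists_charFn_lt_gammaStar (hk : 0 ≤ k) (hl : -(1 / 2) ≤ ℓ) (hL : 0 < L0) (hCl : 0 < Cl)
    (hy : QuasiShell k ℓ L0 y)
    (hrho : ∀ r, innerRadius L0 y ≤ r → r ≤ 2 * innerRadius L0 y → 0 ≤ charFn L0 y r →
      Cl * charFn L0 y r ^ qExp k ℓ / r ^ 4 ≤ rho k ℓ L0 y r)
    (hσ : sigmaStar k ℓ Cu (innerRadius L0 y) ≤ innerRadius L0 y / 4)
    (hK : innerRadius L0 y ^ (1 / (1 + qExp k ℓ)) * Kc k ℓ Cl Cu ≤ 1) :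
    ∃ r ∈ Icc (innerRadius L0 y + sigmaStar k ℓ Cu (innerRadius L0 y))
        (innerRadius L0 y + sigmaStar k ℓ Cu (innerRadius L0 y) +
          kappaC k ℓ Cl Cu * innerRadius L0 y ^ ((qExp k ℓ + 2) / (qExp k ℓ + 1))),
      charFn L0 y r < gammaStar k ℓ Cu (innerRadius L0 y) := by
  have hq := qExp_pos hk hl
  have hR := innerRadius_pos (y := y) hL
  have hσ0 := sigmaStar_pos (k := k) (ℓ := ℓ) (Cu := Cu) hR
  have hκ := kappaC_pos (k := k) (ℓ := ℓ) (Cu := Cu) hCl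
  have hthickness := kappaC_mul_rpow_le hq hR hK
  have hbalance := nine_mul_cube_le hq hCl hR (hσ.trans (by linarith))
  set R := innerRadius L0 y
  set a := R + sigmaStar k ℓ Cu R
  set δ := kappaC k ℓ Cl Cu * R ^ ((qExp k ℓ + 2) / (qExp k ℓ + 1))
  have hδ : 0 < δ := by positivity
  have ha : R ≤ a := by linarith
  have hb : a + δ / 2 ≤ 2 * R := by linarith
  have hthick : (a + δ / 2) ^ 3 ≤
      8 * π * (Cl * gammaStar k ℓ Cu R ^ qExp k ℓ * (a + δ / 2 - a)) := calc
    (a + δ / 2) ^ 3 ≤ (2 * R) ^ 3 := by gcongr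
    _ ≤ 8 * 3 * (9 * R ^ 3 / 2) := by nlinarith [pow_pos hR 3]
    _ ≤ 8 * π * (Cl * gammaStar k ℓ Cu R ^ qExp k ℓ * δ / 2) := by
        gcongr
        exact pi_gt_three.le
    _ = _ := by ring
  obtain ⟨r, hr, hlt⟩ := hy.exists_charFn_lt hk hl hL hCl.le
    (fun r hr => hrho r (ha.trans hr.1) (hr.2.trans hb)) (hR.trans_le ha) (by linarith)
    (gammaStar_pos hR).le hthick
  exact ⟨r, ⟨hr.1, hr.2.trans (by linarith)⟩, hlt⟩

end QuasiShell

/-- Existence of the radius `r₂` where `γ` comes back down to `γ_*`,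
with `r₂ ≤ R₀ + σ_* + κ R₀^{(q+2)/(q+1)}`. -/
theorem second_crossing (k ℓ L0 Cl Cu : ℝ)
    (hk : 0 ≤ k) (hl : -(1 / 2) ≤ ℓ) (hL : 0 < L0) (hCl : 0 < Cl) (hCu : 0 < Cu) :
    ∃ ε : ℝ, 0 < ε ∧
      ∀ y : ℝ → ℝ, QuasiShell k ℓ L0 y →
        (∀ r, innerRadius L0 y ≤ r → r ≤ 2 * innerRadius L0 y →
          0 ≤ charFn L0 y r →
          Cl * charFn L0 y r ^ qExp k ℓ / r ^ 4 ≤ rho k ℓ L0 y r ∧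
          pres k ℓ L0 y r ≤ Cu * charFn L0 y r ^ (qExp k ℓ + 1) / r ^ 4) →
        innerRadius L0 y ≤ ε →
        innerRadius L0 y ^ (1 / (1 + qExp k ℓ)) * Kc k ℓ Cl Cu ≤ 1 →
        ∃ r2 : ℝ,
          innerRadius L0 y + sigmaStar k ℓ Cu (innerRadius L0 y) < r2 ∧
          r2 ≤ innerRadius L0 y + sigmaStar k ℓ Cu (innerRadius L0 y) +
              kappaC k ℓ Cl Cu * innerRadius L0 y ^ ((qExp k ℓ + 2) / (qExp k ℓ + 1)) ∧
          charFn L0 y r2 = gammaStar k ℓ Cu (innerRadius L0 y) ∧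
          ∀ r, innerRadius L0 y + sigmaStar k ℓ Cu (innerRadius L0 y) ≤ r → r ≤ r2 →
            gammaStar k ℓ Cu (innerRadius L0 y) ≤ charFn L0 y r := by
  have hq := qExp_pos hk hl
  have hD := densityConst_nonneg (ℓ := ℓ) hL.le
  obtain ⟨ε, hε, hsmall⟩ := exists_forall_mul_rpow_le
    (A := 4 * π * (Cu + densityConst ℓ L0 * 2 ^ (2 * ℓ + 4))) (by positivity) (inv_pos.2 hq)
    (show (0 : ℝ) < 1 / 6 by norm_num)
  refine ⟨min 1 ε, lt_min one_pos hε, fun y hy hmatter hRε hK => ?_⟩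
  have hR := innerRadius_pos (y := y) hL
  have hσ0 := sigmaStar_pos (k := k) (ℓ := ℓ) (Cu := Cu) hR
  have hσ := sigmaStar_le (Cu := Cu) hq.le hR (hRε.trans (min_le_left 1 ε))
  have hstart := hy.gammaStar_lt_charFn hk hl hL hCu.le
    (fun r hr hr2 hγ => (hmatter r hr hr2 hγ).2) (by linarith)
    (hsmall _ hR.le (hRε.trans (min_le_right 1 ε)))
  obtain ⟨r, hr, hlt⟩ := hy.exists_charFn_lt_gammaStar hk hl hL hCl
    (fun r hr hr2 hγ => (hmatter r hr hr2 hγ).1) hσ hK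
  obtain ⟨r2, hr2, heq, hge⟩ := exists_first_eq_of_continuousOn
    ((hy.continuousOn_charFn hL).mono fun s hs => (add_pos hR hσ0).trans_le hs.1) hstart
    ⟨r, hr, hlt.le⟩
  exact ⟨r2, hr2.1, hr2.2, heq, fun s hs hsr => hge s ⟨hs, hsr⟩⟩
end

section
/- Let r > 0 and suppose the real-valued functions λ, y, m, ϱ, p, p_T are differentiable at r and satisfy m′(r) = 4πr²ϱ(r), λ′(r) − y′(r) = 4πr e^{2λ(r)}(ϱ(r) + p(r)), y′(r) = −e^{2λ(r)}[m(r)/r² + 4πr p(r)], and the Tolman–Oppenheimer–Volkov equation p′(r) = y′(r)(ϱ(r) + p(r)) − (2/r)(p(r) − p_T(r)). Then (d/dr)[e^{λ(r)−y(r)}(m(r) + 4πr³p(r))] = 4πr² e^{λ(r)−y(r)}(ϱ(r) + p(r) + 2p_T(r)). -/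
open Real

/-!
Put `M = m + 4πr³p`. The equation for `y'` says that `e^{2λ} M = -r² y'`, so differentiating the
exponential weight contributes `(λ' - y') M = 4πr (ϱ + p) e^{2λ} M = -4πr³ y' (ϱ + p)`. This is
exactly the opposite of the gravitational force term that the TOV equation puts into `4πr³ p'`.
After the cancellation only `m'`, `12πr² p` and the anisotropy term `-8πr² (p - p_T)` survive.
Up to the constant `E₀`, the differentiated quantity is the Tolman–Whittaker mass `e^{μ+λ} M`.
-/

/-- The active gravitational mass `m + 4πr³p` at radius `r`: the source of the gravitational
acceleration in the equation for `y'`, combining the Hawking mass with the pressure. -/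
noncomputable def activeMass (m p : ℝ → ℝ) (r : ℝ) : ℝ :=
  m r + 4 * π * r ^ 3 * p r

section ActiveMass

variable {m p : ℝ → ℝ} {r : ℝ}

lemma hasDerivAt_activeMass {m' p' : ℝ} (hm : HasDerivAt m m' r) (hp : HasDerivAt p p' r) :
    HasDerivAt (activeMass m p) (m' + 4 * π * (3 * r ^ 2 * p r + r ^ 3 * p')) r := by
  have hcube : HasDerivAt (fun s : ℝ => 4 * π * s ^ 3) (4 * π * (3 * r ^ 2)) r := by
    simpa using (hasDerivAt_pow 3 r).const_mul (4 * π)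
  exact (hm.add (hcube.mul hp)).congr_deriv (by ring)

lemma mul_activeMass_eq_neg_sq_mul {a y' : ℝ} (hr : r ≠ 0)
    (hy' : y' = -a * (m r / r ^ 2 + 4 * π * r * p r)) :
    a * activeMass m p r = -(r ^ 2 * y') := by
  rw [hy', activeMass]
  field_simp

end ActiveMass

lemma cube_mul_deriv_pressure_of_tov {r y' ϱ p p' pT : ℝ} (hr : r ≠ 0)
    (htov : p' = y' * (ϱ + p) - (2 / r) * (p - pT)) :
    r ^ 3 * p' = r ^ 3 * y' * (ϱ + p) - 2 * r ^ 2 * (p - pT) := by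
  rw [htov]
  field_simp

/-- The TOV identity
`(d/dr)[e^{λ-y}(m + 4πr³p)] = 4πr² e^{λ-y}(ϱ + p + 2p_T)`. -/
theorem tov_derivative_identity (r : ℝ) (hr : 0 < r) (lam y m ϱ p pT : ℝ → ℝ)
    (hlam : DifferentiableAt ℝ lam r) (hy : DifferentiableAt ℝ y r)
    (hm : DifferentiableAt ℝ m r) (hpd : DifferentiableAt ℝ p r)
    (h1 : deriv m r = 4 * π * r ^ 2 * ϱ r)
    (h2 : deriv lam r - deriv y r = 4 * π * r * Real.exp (2 * lam r) * (ϱ r + p r))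
    (h3 : deriv y r = -Real.exp (2 * lam r) * (m r / r ^ 2 + 4 * π * r * p r))
    (h4 : deriv p r = deriv y r * (ϱ r + p r) - (2 / r) * (p r - pT r)) :
    deriv (fun s => Real.exp (lam s - y s) * (m s + 4 * π * s ^ 3 * p s)) r
      = 4 * π * r ^ 2 * Real.exp (lam r - y r) * (ϱ r + p r + 2 * pT r) := by
  have hM := hasDerivAt_activeMass hm.hasDerivAt hpd.hasDerivAt
  have hweight : (deriv lam r - deriv y r) * activeMass m p r
      = -(4 * π * r ^ 3 * deriv y r * (ϱ r + p r)) := by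
    rw [h2]
    linear_combination 4 * π * r * (ϱ r + p r) * mul_activeMass_eq_neg_sq_mul hr.ne' h3
  have hpressure := cube_mul_deriv_pressure_of_tov hr.ne' h4
  calc
    _ = Real.exp (lam r - y r) * (deriv lam r - deriv y r) * activeMass m p r
        + Real.exp (lam r - y r)
          * (deriv m r + 4 * π * (3 * r ^ 2 * p r + r ^ 3 * deriv p r)) :=
      ((hlam.hasDerivAt.sub hy.hasDerivAt).exp.mul hM).deriv
    _ = Real.exp (lam r - y r)
        * (-(4 * π * r ^ 3 * deriv y r * (ϱ r + p r)) + (4 * π * r ^ 2 * ϱ r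
          + 4 * π * (3 * r ^ 2 * p r
            + (r ^ 3 * deriv y r * (ϱ r + p r) - 2 * r ^ 2 * (p r - pT r))))) := by
      rw [mul_assoc, hweight, h1, hpressure, ← mul_add]
    _ = 4 * π * r ^ 2 * Real.exp (lam r - y r) * (ϱ r + p r + 2 * pT r) := by ring
end

section
/- Let 0 < R₀ < r₂ and let m : [R₀, r₂] → ℝ be differentiable with m(R₀) = 0, m′(s) = 4πs²ϱ(s) for a continuous nonnegative function ϱ, m(s) ≥ 0 and 2m(s)/s < 1 for all s ∈ [R₀, r₂]; define λ by e^{−2λ(s)} = 1 − 2m(s)/s. Then ∫_{R₀}^{r₂} 4πs ϱ(s) e^{λ(s)} ds ≥ 1 − √(1 − 2m(r₂)/r₂). -/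
open MeasureTheory Real Set

/-!
With `e^{-2λ} = 1 - 2m/s` and `m' = 4πs²ϱ` one has `4πsϱe^λ = -(e^{-λ})' + e^λ m/s²`. The last term
is nonnegative, and the first is integrated by the fundamental theorem of calculus.
-/

theorem sqrt_exp_neg_two_mul (x : ℝ) : √(exp (-(2 * x))) = exp (-x) := by
  rw [← exp_half]
  ring_nf

theorem continuousOn_of_exp_neg_two_mul {α : Type*} [TopologicalSpace α] {lam : α → ℝ} {S : Set α}
    (h : ContinuousOn (fun s => exp (-(2 * lam s))) S) : ContinuousOn lam S := by
  simpa using (h.log fun _ _ => exp_ne_zero _).div_const (-2)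

theorem hasDerivWithinAt_sqrt_one_sub_two_mul_div {m : ℝ → ℝ} {m' s : ℝ} {S : Set ℝ}
    (hm : HasDerivWithinAt m m' S s) (hs : s ≠ 0) (hne : 1 - 2 * m s / s ≠ 0) :
    HasDerivWithinAt (fun r => √(1 - 2 * m r / r))
      ((m s / s ^ 2 - m' / s) / √(1 - 2 * m s / s)) S s := by
  have hquot : HasDerivWithinAt (fun r => 1 - 2 * m r / r) (2 * (m s / s ^ 2 - m' / s)) S s := by
    refine (((hm.const_mul 2).fun_div (hasDerivWithinAt_id s S) hs).const_sub 1).congr_deriv ?_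
    simp only [id]
    field_simp
    ring
  exact (hquot.sqrt hne).congr_deriv (mul_div_mul_left _ _ two_ne_zero)

theorem hasDerivWithinAt_neg_sqrt_of_exp_neg_two_mul_eq {m : ℝ → ℝ} {ϱ l s : ℝ} {S : Set ℝ}
    (hm : HasDerivWithinAt m (4 * π * s ^ 2 * ϱ) S s) (hs : s ≠ 0)
    (hl : exp (-(2 * l)) = 1 - 2 * m s / s) :
    HasDerivWithinAt (fun r => -√(1 - 2 * m r / r))
      (4 * π * s * ϱ * exp l - exp l * m s / s ^ 2) S s := by
  have hne : 1 - 2 * m s / s ≠ 0 := hl ▸ exp_ne_zero _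
  refine (hasDerivWithinAt_sqrt_one_sub_two_mul_div hm hs hne).fun_neg.congr_deriv ?_
  rw [← hl, sqrt_exp_neg_two_mul, exp_neg, div_inv_eq_mul]
  field_simp
  ring

theorem integral_lower_bound_general {R0 r2 : ℝ} (hR0 : 0 < R0) (hr2 : R0 ≤ r2) {m ϱ lam : ℝ → ℝ}
    (hϱ : IntervalIntegrable ϱ volume R0 r2) (hm : ContinuousOn m (Icc R0 r2))
    (hm' : ∀ s ∈ Ioo R0 r2, HasDerivWithinAt m (4 * π * s ^ 2 * ϱ s) (Ioi s) s)
    (hmnn : ∀ s ∈ Ioo R0 r2, 0 ≤ m s)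
    (hlam : ∀ s ∈ Icc R0 r2, exp (-(2 * lam s)) = 1 - 2 * m s / s) :
    √(1 - 2 * m R0 / R0) - √(1 - 2 * m r2 / r2) ≤
      ∫ s in R0..r2, 4 * π * s * ϱ s * exp (lam s) := by
  have hcont : ContinuousOn (fun s => 1 - 2 * m s / s) (Icc R0 r2) :=
    continuousOn_const.sub <| (hm.const_mul 2).div continuousOn_id
      fun s hs => (hR0.trans_le hs.1).ne'
  have hlam_cont : ContinuousOn lam (Icc R0 r2) :=
    continuousOn_of_exp_neg_two_mul (hcont.congr hlam)
  have hint : IntervalIntegrable (fun s => 4 * π * s * ϱ s * exp (lam s)) volume R0 r2 :=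
    (hϱ.continuousOn_mul (by fun_prop)).mul_continuousOn (uIcc_of_le hr2 ▸ hlam_cont.rexp)
  have hderiv : ∀ s ∈ Ioo R0 r2, HasDerivWithinAt (fun r => -√(1 - 2 * m r / r))
      (4 * π * s * ϱ s * exp (lam s) - exp (lam s) * m s / s ^ 2) (Ioi s) s := fun s hs =>
    hasDerivWithinAt_neg_sqrt_of_exp_neg_two_mul_eq (hm' s hs) (hR0.trans hs.1).ne'
      (hlam s (Ioo_subset_Icc_self hs))
  have hle : ∀ s ∈ Ioo R0 r2, 4 * π * s * ϱ s * exp (lam s) - exp (lam s) * m s / s ^ 2 ≤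
      4 * π * s * ϱ s * exp (lam s) := fun s hs =>
    sub_le_self _ <| div_nonneg (mul_nonneg (exp_pos _).le (hmnn s hs)) (sq_nonneg s)
  simpa only [Pi.neg_apply, neg_sub_neg] using
    intervalIntegral.sub_le_integral_of_hasDeriv_right_of_le hr2 hcont.sqrt.neg hderiv
      ((intervalIntegrable_iff_integrableOn_Icc_of_le hr2).1 hint) hle

/-- `∫_{R₀}^{r₂} 4πs ϱ(s) e^{λ(s)} ds ≥ 1 - √(1 - 2m(r₂)/r₂)`,
where `λ` is defined by `e^{-2λ(s)} = 1 - 2m(s)/s`. -/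
theorem integral_lower_bound (R0 r2 : ℝ) (hR0 : 0 < R0) (hr2 : R0 < r2)
    (m ϱ lam : ℝ → ℝ)
    (hϱcont : ContinuousOn ϱ (Set.Icc R0 r2))
    (hϱnn : ∀ s ∈ Set.Icc R0 r2, 0 ≤ ϱ s)
    (hm0 : m R0 = 0)
    (hm' : ∀ s ∈ Set.Icc R0 r2,
      HasDerivWithinAt m (4 * π * s ^ 2 * ϱ s) (Set.Icc R0 r2) s)
    (hmnn : ∀ s ∈ Set.Icc R0 r2, 0 ≤ m s)
    (hmlt : ∀ s ∈ Set.Icc R0 r2, 2 * m s / s < 1)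
    (hlam : ∀ s ∈ Set.Icc R0 r2, Real.exp (-(2 * lam s)) = 1 - 2 * m s / s) :
    1 - Real.sqrt (1 - 2 * m r2 / r2) ≤
      ∫ s in Set.Ioc R0 r2, 4 * π * s * ϱ s * Real.exp (lam s) := by
  simpa [hm0, intervalIntegral.integral_of_le hr2.le] using
    integral_lower_bound_general hR0 hr2.le (hϱcont.intervalIntegrable_of_Icc hr2.le)
      (HasDerivWithinAt.continuousOn hm')
      (fun s hs => (hm' s (Ioo_subset_Icc_self hs)).mono_of_mem_nhdsWithin
        (Icc_mem_nhdsGT_of_mem (Ioo_subset_Ico_self hs)))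
      (fun s hs => hmnn s (Ioo_subset_Icc_self hs)) hlam
end

section
/- Let 0 < r₂ < R and let x : [r₂, R) → ℝ be differentiable with x(r) > 3/4 for all r and satisfying the differential inequality r x′(r) ≥ (4/3)x(r)² − x(r) for all r ∈ [r₂, R). Then 1/x(r) ≤ 4/3 − (4/3 − 1/x(r₂))·(r/r₂) for all r ∈ [r₂, R); in particular, since 1/x(r) > 0, one has R ≤ r₂ · 4x(r₂)/(4x(r₂) − 3). -/
open Real Set

/-!
The reciprocal of `x` satisfies the linear inequality `r (1 / x)' ≤ 1 / x - a`, which says that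
`(a - 1 / x) / r` is nondecreasing; comparing its values at `r₂` and `r` bounds `1 / x r` by an
affine function of `r`. As `1 / x` is positive on `[r₂, R)`, that affine function is nonnegative up
to `R`, which bounds `R`. Positivity of `x` propagates from `r₂` because
`(r x)' = x + r x' ≥ a x ^ 2 ≥ 0`.
-/

section Riccati

theorem hasDerivWithinAt_sub_inv_div {𝕜 : Type*} [NontriviallyNormedField 𝕜] {x : 𝕜 → 𝕜}
    {s : Set 𝕜} {a r d : 𝕜} (hr : r ≠ 0) (hxr : x r ≠ 0) (hd : HasDerivWithinAt x d s r) :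
    HasDerivWithinAt (fun r ↦ (a - (x r)⁻¹) / r)
      ((r * d - (a * x r ^ 2 - x r)) / (r * x r) ^ 2) s r := by
  refine (((hd.fun_inv hxr).const_sub a).fun_div (hasDerivWithinAt_id r s) hr).congr_deriv ?_
  simp only [id]
  field_simp

variable {a : ℝ} {x x' : ℝ → ℝ} {s : Set ℝ}

theorem monotoneOn_id_mul_of_riccati (ha : 0 ≤ a) (hs : Convex ℝ s)
    (hx' : ∀ r ∈ s, HasDerivWithinAt x (x' r) s r)
    (hriccati : ∀ r ∈ s, a * x r ^ 2 - x r ≤ r * x' r) :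
    MonotoneOn (fun r ↦ r * x r) s := by
  have hderiv : ∀ r ∈ s, HasDerivWithinAt (fun r ↦ r * x r) (1 * x r + r * x' r) s r :=
    fun r hr ↦ (hasDerivWithinAt_id r s).mul (hx' r hr)
  refine monotoneOn_of_hasDerivWithinAt_nonneg hs (fun r hr ↦ (hderiv r hr).continuousWithinAt)
    (fun r hr ↦ (hderiv r (interior_subset hr)).mono interior_subset) fun r hr ↦ ?_
  have hquad : 0 ≤ a * x r ^ 2 := by positivity
  linarith [hriccati r (interior_subset hr)]

theorem monotoneOn_sub_inv_div_of_riccati (hs : Convex ℝ s) (hs0 : ∀ r ∈ s, r ≠ 0)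
    (hx0 : ∀ r ∈ s, x r ≠ 0) (hx' : ∀ r ∈ s, HasDerivWithinAt x (x' r) s r)
    (hriccati : ∀ r ∈ s, a * x r ^ 2 - x r ≤ r * x' r) :
    MonotoneOn (fun r ↦ (a - (x r)⁻¹) / r) s := by
  have hderiv := fun r hr ↦
    hasDerivWithinAt_sub_inv_div (a := a) (hs0 r hr) (hx0 r hr) (hx' r hr)
  exact monotoneOn_of_hasDerivWithinAt_nonneg hs (fun r hr ↦ (hderiv r hr).continuousWithinAt)
    (fun r hr ↦ (hderiv r (interior_subset hr)).mono interior_subset)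
    fun r hr ↦ div_nonneg (sub_nonneg.2 (hriccati r (interior_subset hr))) (sq_nonneg _)

theorem pos_of_riccati (ha : 0 ≤ a) (hs : Convex ℝ s)
    (hx' : ∀ r ∈ s, HasDerivWithinAt x (x' r) s r)
    (hriccati : ∀ r ∈ s, a * x r ^ 2 - x r ≤ r * x' r) {r₀ r : ℝ} (hr₀ : r₀ ∈ s) (hr : r ∈ s)
    (hr₀r : r₀ ≤ r) (hr₀_pos : 0 < r₀) (hx₀ : 0 < x r₀) : 0 < x r := by
  have hmul : r₀ * x r₀ ≤ r * x r := monotoneOn_id_mul_of_riccati ha hs hx' hriccati hr₀ hr hr₀r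
  exact pos_of_mul_pos_right ((mul_pos hr₀_pos hx₀).trans_le hmul) (hr₀_pos.le.trans hr₀r)

theorem one_div_le_of_riccati (hs : Convex ℝ s) (hs_pos : ∀ r ∈ s, 0 < r)
    (hx0 : ∀ r ∈ s, x r ≠ 0) (hx' : ∀ r ∈ s, HasDerivWithinAt x (x' r) s r)
    (hriccati : ∀ r ∈ s, a * x r ^ 2 - x r ≤ r * x' r) {r₀ r : ℝ} (hr₀ : r₀ ∈ s) (hr : r ∈ s)
    (hr₀r : r₀ ≤ r) : 1 / x r ≤ a - (a - 1 / x r₀) * (r / r₀) := by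
  have hquot : (a - (x r₀)⁻¹) / r₀ ≤ (a - (x r)⁻¹) / r :=
    monotoneOn_sub_inv_div_of_riccati hs (fun t ht ↦ (hs_pos t ht).ne') hx0 hx' hriccati
      hr₀ hr hr₀r
  rw [one_div, one_div, le_sub_comm]
  calc (a - (x r₀)⁻¹) * (r / r₀) = (a - (x r₀)⁻¹) / r₀ * r := by ring
    _ ≤ a - (x r)⁻¹ := (le_div_iff₀ (hs_pos r hr)).1 hquot

variable {r₂ R : ℝ}

theorem right_endpoint_le_of_one_div_le (hr₂ : 0 < r₂) (hR : r₂ < R)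
    (hx : ∀ r ∈ Ico r₂ R, 0 < x r) (hax₂ : 1 < a * x r₂)
    (hbound : ∀ r ∈ Ico r₂ R, 1 / x r ≤ a - (a - 1 / x r₂) * (r / r₂)) :
    R ≤ r₂ * (a * x r₂) / (a * x r₂ - 1) := by
  have hx₂ : 0 < x r₂ := hx r₂ (left_mem_Ico.2 hR)
  have hnonneg : ∀ r ∈ Ico r₂ R, 0 ≤ a - (a - 1 / x r₂) * (r / r₂) :=
    fun r hr ↦ (one_div_pos.2 (hx r hr)).le.trans (hbound r hr)
  have hnonneg_R : 0 ≤ a - (a - 1 / x r₂) * (R / r₂) := by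
    refine le_on_closure hnonneg (by fun_prop) (by fun_prop) ?_
    rw [closure_Ico hR.ne]
    exact right_mem_Icc.2 hR.le
  rw [le_div_iff₀ (sub_pos.2 hax₂), ← sub_nonneg]
  calc 0 ≤ (a - (a - 1 / x r₂) * (R / r₂)) * (r₂ * x r₂) := by positivity
    _ = r₂ * (a * x r₂) - R * (a * x r₂ - 1) := by field_simp

theorem riccati_comparison_general (ha : 0 ≤ a) (hr₂ : 0 < r₂) (hR : r₂ < R) (hx₂ : 0 < x r₂)
    (hx' : ∀ r ∈ Ico r₂ R, HasDerivWithinAt x (x' r) (Ico r₂ R) r)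
    (hriccati : ∀ r ∈ Ico r₂ R, a * x r ^ 2 - x r ≤ r * x' r) :
    (∀ r ∈ Ico r₂ R, 1 / x r ≤ a - (a - 1 / x r₂) * (r / r₂)) ∧
    (1 < a * x r₂ → R ≤ r₂ * (a * x r₂) / (a * x r₂ - 1)) := by
  have hmem : r₂ ∈ Ico r₂ R := left_mem_Ico.2 hR
  have hx : ∀ r ∈ Ico r₂ R, 0 < x r := fun r hr ↦
    pos_of_riccati ha (convex_Ico r₂ R) hx' hriccati hmem hr hr.1 hr₂ hx₂
  have hbound : ∀ r ∈ Ico r₂ R, 1 / x r ≤ a - (a - 1 / x r₂) * (r / r₂) := fun r hr ↦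
    one_div_le_of_riccati (convex_Ico r₂ R) (fun t ht ↦ hr₂.trans_le ht.1)
      (fun t ht ↦ (hx t ht).ne') hx' hriccati hmem hr hr.1
  exact ⟨hbound, fun hax₂ ↦ right_endpoint_le_of_one_div_le hr₂ hR hx hax₂ hbound⟩

end Riccati

/-- Comparison lemma for the Riccati-type differential inequality
`r x' ≥ (4/3)x² - x` with `x > 3/4` on `[r₂, R)`. -/
theorem riccati_comparison (r2 R : ℝ) (hr2 : 0 < r2) (hR : r2 < R) (x : ℝ → ℝ)
    (hx : ∀ r ∈ Set.Ico r2 R, 3 / 4 < x r)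
    (hdiff : DifferentiableOn ℝ x (Set.Ico r2 R))
    (hineq : ∀ r ∈ Set.Ico r2 R,
      (4 / 3) * x r ^ 2 - x r ≤ r * derivWithin x (Set.Ico r2 R) r) :
    (∀ r ∈ Set.Ico r2 R, 1 / x r ≤ 4 / 3 - (4 / 3 - 1 / x r2) * (r / r2)) ∧
    R ≤ r2 * (4 * x r2) / (4 * x r2 - 3) := by
  have hx₂ : 3 / 4 < x r2 := hx r2 (left_mem_Ico.2 hR)
  obtain ⟨hbound, hend⟩ := riccati_comparison_general (by norm_num) hr2 hR (by linarith)
    (fun r hr ↦ (hdiff r hr).hasDerivWithinAt) hineq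
  refine ⟨hbound, (hend (by linarith)).trans_eq ?_⟩
  rw [← mul_div_mul_left _ _ three_ne_zero]
  ring_nf
end
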